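/- arXiv:math-ph/0202021 — 2 statements merged into one kernel-verified Lean document; each statement's English description precedes it below -/
import Mathlib

section
/- Diagonal coherent-state matrix elements of an operator commuting with the free Hamiltonian are Gaussian averages of its on-shell symbol: let S : ℝ → ℂ be bounded and measurable, and let A be the Fourier multiplier operator on L²(ℝ,ℂ) with symbol S, i.e. 𝓕(Aψ)(E) = S(E) · (𝓕ψ)(E) for a.e. E. Then for all t, e ∈ ℝ and ε > 0, ⟪ψ_{t,e,ε}, A ψ_{t,e,ε}⟫ = (√π ε)^{−1} ∫_ℝ S(E) e^{−(E−e)²/ε²} dE. -/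
open MeasureTheory Complex

/-- The time-energy coherent state `ψ_{t,e,ε}(x) = (ε²/π)^{1/4} e^{ite/2} e^{iex}
e^{-ε²(x+t)²/2}`. -/
noncomputable def coherentState (t e ε : ℝ) : ℝ → ℂ := fun x =>
  (((ε ^ 2 / Real.pi) ^ ((1 : ℝ) / 4) : ℝ) : ℂ) *
    Complex.exp (Complex.I * (t : ℂ) * (e : ℂ) / 2) *
    Complex.exp (Complex.I * (e : ℂ) * (x : ℂ)) *
    Complex.exp (-((ε : ℂ) ^ 2 * ((x : ℂ) + (t : ℂ)) ^ 2 / 2))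

/-- The Fourier transform `(𝓕ψ)(E) = (2π)^{-1/2} ∫ e^{-iEx} ψ(x) dx`. -/
noncomputable def fourierTransform (ψ : ℝ → ℂ) (E : ℝ) : ℂ :=
  (((Real.sqrt (2 * Real.pi))⁻¹ : ℝ) : ℂ) *
    ∫ x : ℝ, Complex.exp (-(Complex.I * (E : ℂ) * (x : ℂ))) * ψ x

/-- The inverse Fourier transform `(𝓕⁻¹g)(x) = (2π)^{-1/2} ∫ e^{iEx} g(E) dE`. -/
noncomputable def inverseFourierTransform (g : ℝ → ℂ) (x : ℝ) : ℂ :=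
  (((Real.sqrt (2 * Real.pi))⁻¹ : ℝ) : ℂ) *
    ∫ E : ℝ, Complex.exp (Complex.I * (E : ℂ) * (x : ℂ)) * g E

/-! Plancherel moves `𝓕⁻¹` onto the bra, so that `⟪ψ, 𝓕⁻¹ (S · 𝓕 ψ)⟫ = ∫ S |𝓕 ψ|²`. The Fourier
transform exchanges time and energy, `𝓕 ψ_{t,e,ε} = ψ_{-e,t,1/ε}` (phases included), so `|𝓕 ψ|²` is
a normalized Gaussian centred at `e`. -/

lemma fourierTransform_eq_fourierIntegral_probChar (ψ : ℝ → ℂ) (E : ℝ) :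
    fourierTransform ψ E = (((Real.sqrt (2 * Real.pi))⁻¹ : ℝ) : ℂ) *
      VectorFourier.fourierIntegral Real.probChar volume (LinearMap.mul ℝ ℝ) ψ E := by
  rw [VectorFourier.fourierIntegral_probChar, fourierTransform]
  congr! 4 with x
  simp only [LinearMap.mul_apply', ofReal_mul]
  ring_nf

lemma inverseFourierTransform_eq_fourierIntegral_probChar (g : ℝ → ℂ) (x : ℝ) :
    inverseFourierTransform g x = (((Real.sqrt (2 * Real.pi))⁻¹ : ℝ) : ℂ) *
      VectorFourier.fourierIntegral Real.probChar volume (-(LinearMap.mul ℝ ℝ).flip) g x := by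
  rw [VectorFourier.fourierIntegral_probChar, inverseFourierTransform]
  congr! 4 with E
  simp only [LinearMap.neg_apply, LinearMap.flip_apply, LinearMap.mul_apply', ofReal_neg,
    ofReal_mul, neg_neg]
  ring_nf

lemma integral_conj_mul_inverseFourierTransform {ψ g : ℝ → ℂ} (hψ : Integrable ψ)
    (hg : Integrable g) :
    ∫ x, (starRingEnd ℂ) (ψ x) * inverseFourierTransform g x =
      ∫ E, (starRingEnd ℂ) (fourierTransform ψ E) * g E := by
  have plancherel := VectorFourier.integral_sesq_fourierIntegral_eq_neg_flip (innerSL ℂ)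
    (L := LinearMap.mul ℝ ℝ) Real.continuous_probChar continuous_mul hψ hg
  simp only [innerSL_apply_apply, RCLike.inner_apply'] at plancherel
  simp only [fourierTransform_eq_fourierIntegral_probChar,
    inverseFourierTransform_eq_fourierIntegral_probChar, map_mul, conj_ofReal, mul_assoc,
    mul_left_comm _ (((Real.sqrt (2 * Real.pi))⁻¹ : ℝ) : ℂ), integral_const_mul, plancherel]

lemma integral_conj_mul_fourierMultiplier {S ψ : ℝ → ℂ} (hψ : Integrable ψ)
    (hSψ : Integrable fun E => S E * fourierTransform ψ E) :
    ∫ x, (starRingEnd ℂ) (ψ x) *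
        inverseFourierTransform (fun E => S E * fourierTransform ψ E) x =
      ∫ E, S E * ((‖fourierTransform ψ E‖ ^ 2 : ℝ) : ℂ) := by
  rw [integral_conj_mul_inverseFourierTransform hψ hSψ]
  congr! 2 with E
  rw [mul_left_comm, conj_mul', ofReal_pow]

lemma integrable_exp_neg_sub_sq_div (e : ℝ) {ε : ℝ} (hε : ε ≠ 0) :
    Integrable fun x : ℝ => Real.exp (-((x - e) ^ 2 / (2 * ε ^ 2))) := by
  convert (integrable_exp_neg_mul_sq (b := (2 * ε ^ 2)⁻¹) (by positivity)).comp_sub_right e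
    using 3
  rw [neg_mul, inv_mul_eq_div]

lemma coherentState_eq_ofReal_mul_phase (t e ε x : ℝ) :
    coherentState t e ε x =
      (((ε ^ 2 / Real.pi) ^ ((1 : ℝ) / 4) * Real.exp (-(ε ^ 2 * (x + t) ^ 2 / 2)) : ℝ) : ℂ) *
        cexp ((e * (x + t / 2) : ℝ) * I) := by
  have phase : cexp ((e * (x + t / 2) : ℝ) * I) = cexp (I * t * e / 2) * cexp (I * e * x) := by
    rw [← Complex.exp_add]
    push_cast
    ring_nf
  rw [phase, coherentState]
  push_cast
  ring

lemma norm_coherentState (t e ε x : ℝ) :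
    ‖coherentState t e ε x‖ =
      (ε ^ 2 / Real.pi) ^ ((1 : ℝ) / 4) * Real.exp (-(ε ^ 2 * (x + t) ^ 2 / 2)) := by
  rw [coherentState_eq_ofReal_mul_phase, norm_mul, norm_exp_ofReal_mul_I, mul_one,
    Complex.norm_of_nonneg (by positivity)]

lemma norm_coherentState_sq (t e ε x : ℝ) :
    ‖coherentState t e ε x‖ ^ 2 =
      |ε| / Real.sqrt Real.pi * Real.exp (-(ε ^ 2 * (x + t) ^ 2)) := by
  have amplitude_sq : ((ε ^ 2 / Real.pi) ^ ((1 : ℝ) / 4)) ^ 2 = |ε| / Real.sqrt Real.pi := by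
    rw [← Real.rpow_mul_natCast (by positivity), ← Real.sqrt_sq_eq_abs,
      ← Real.sqrt_div (sq_nonneg ε), Real.sqrt_eq_rpow]
    norm_num
  rw [norm_coherentState, mul_pow, amplitude_sq, ← Real.exp_nat_mul]
  congr 2
  push_cast
  ring

lemma integrable_mul_coherentState {f : ℝ → ℂ} {t ε : ℝ} (e : ℝ)
    (hf : Integrable fun x => f x * (Real.exp (-(ε ^ 2 * (x + t) ^ 2 / 2)) : ℂ)) :
    Integrable fun x => f x * coherentState t e ε x := by
  refine ((hf.mul_bdd (g := fun x => cexp ((e * (x + t / 2) : ℝ) * I)) (c := 1) (by fun_prop)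
    (.of_forall fun x => (norm_exp_ofReal_mul_I _).le)).const_mul
      (((ε ^ 2 / Real.pi) ^ ((1 : ℝ) / 4) : ℝ) : ℂ)).congr (.of_forall fun x => ?_)
  simp only [coherentState_eq_ofReal_mul_phase, ofReal_mul]
  ring

lemma integrable_coherentState (t e : ℝ) {ε : ℝ} (hε : ε ≠ 0) :
    Integrable (coherentState t e ε) := by
  have gaussian : Integrable fun x : ℝ => Real.exp (-(ε ^ 2 * (x + t) ^ 2 / 2)) := by
    convert integrable_exp_neg_sub_sq_div (-t) (inv_ne_zero hε) using 3
    field_simp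
    ring
  refine (gaussian.const_mul ((ε ^ 2 / Real.pi) ^ ((1 : ℝ) / 4))).mono' ?_
    (.of_forall fun x => (norm_coherentState t e ε x).le)
  exact Continuous.aestronglyMeasurable (by unfold coherentState; fun_prop)

lemma exp_mul_coherentState_eq_exp_quadratic (t e ε E x : ℝ) :
    cexp (-(I * E * x)) * coherentState t e ε x =
      (((ε ^ 2 / Real.pi) ^ ((1 : ℝ) / 4) : ℝ) : ℂ) *
        cexp (((-(ε ^ 2 / 2) : ℝ) : ℂ) * x ^ 2 + (I * (e - E) - ε ^ 2 * t) * x +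
          (I * t * e / 2 - ε ^ 2 * t ^ 2 / 2)) := by
  rw [coherentState, mul_assoc _ (cexp _), ← Complex.exp_add, mul_assoc _ (cexp _),
    ← Complex.exp_add, mul_left_comm, ← Complex.exp_add]
  congr 2
  push_cast
  ring

lemma amplitude_fourierTransform_coherentState {ε : ℝ} (hε : ε ≠ 0) :
    (Real.sqrt (2 * Real.pi))⁻¹ *
        ((ε ^ 2 / Real.pi) ^ ((1 : ℝ) / 4) * Real.sqrt (Real.pi / (ε ^ 2 / 2))) =
      (ε⁻¹ ^ 2 / Real.pi) ^ ((1 : ℝ) / 4) := by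
  have rpow_quarter_pow {y : ℝ} (hy : 0 ≤ y) : (y ^ ((1 : ℝ) / 4)) ^ 4 = y := by
    rw [← Real.rpow_mul_natCast hy]
    norm_num
  have sqrt_pow_four {y : ℝ} (hy : 0 ≤ y) : Real.sqrt y ^ 4 = y ^ 2 := by
    rw [pow_mul _ 2 2, Real.sq_sqrt hy]
  rw [← pow_left_inj₀ (by positivity) (by positivity) four_ne_zero, mul_pow, mul_pow, inv_pow,
    sqrt_pow_four (by positivity), sqrt_pow_four (by positivity),
    rpow_quarter_pow (by positivity), rpow_quarter_pow (by positivity)]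
  field_simp

theorem fourierTransform_coherentState (t e : ℝ) {ε : ℝ} (hε : ε ≠ 0) :
    fourierTransform (coherentState t e ε) = coherentState (-e) t ε⁻¹ := by
  ext E
  have hε' : (ε : ℂ) ≠ 0 := ofReal_ne_zero.mpr hε
  have prefactor : ((Real.pi : ℂ) / -((-(ε ^ 2 / 2) : ℝ) : ℂ)) ^ (1 / 2 : ℂ) =
      (Real.sqrt (Real.pi / (ε ^ 2 / 2)) : ℂ) := by
    rw [Real.sqrt_eq_rpow, ofReal_cpow (by positivity)]
    push_cast
    rw [neg_neg]
  have exponent : (I * t * e / 2 - ε ^ 2 * t ^ 2 / 2 : ℂ) -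
      (I * (e - E) - ε ^ 2 * t) ^ 2 / (4 * ((-(ε ^ 2 / 2) : ℝ) : ℂ)) =
      ((-(ε⁻¹ ^ 2 * (E + -e) ^ 2 / 2) : ℝ) : ℂ) + ((t * (E + -e / 2) : ℝ) : ℂ) * I := by
    push_cast
    field_simp
    ring_nf
    simp only [I_sq]
    ring
  simp_rw [fourierTransform, exp_mul_coherentState_eq_exp_quadratic]
  rw [integral_const_mul, integral_cexp_quadratic (by rw [ofReal_re, neg_lt_zero]; positivity),
    prefactor, exponent, Complex.exp_add, coherentState_eq_ofReal_mul_phase,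
    ← amplitude_fourierTransform_coherentState hε]
  push_cast
  ring

lemma norm_fourierTransform_coherentState_sq (t e : ℝ) {ε : ℝ} (hε : ε ≠ 0) (E : ℝ) :
    ‖fourierTransform (coherentState t e ε) E‖ ^ 2 =
      (Real.sqrt Real.pi * |ε|)⁻¹ * Real.exp (-((E - e) ^ 2 / ε ^ 2)) := by
  rw [fourierTransform_coherentState t e hε, norm_coherentState_sq, abs_inv, inv_pow,
    inv_mul_eq_div (ε ^ 2), ← sub_eq_add_neg, div_eq_inv_mul, ← mul_inv]

lemma integrable_mul_fourierTransform_coherentState {S : ℝ → ℂ} (t : ℝ) {e ε : ℝ} (hε : ε ≠ 0)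
    (hS : Integrable fun E => S E * (Real.exp (-((E - e) ^ 2 / (2 * ε ^ 2))) : ℂ)) :
    Integrable fun E => S E * fourierTransform (coherentState t e ε) E := by
  rw [fourierTransform_coherentState t e hε]
  refine integrable_mul_coherentState t ?_
  convert hS using 6 with E
  field_simp
  ring

theorem coherentState_multiplier_matrix_element_general
    (S : ℝ → ℂ) (t e ε : ℝ) (hε : 0 < ε)
    (hS : Integrable fun E : ℝ => S E * ((Real.exp (-((E - e) ^ 2 / (2 * ε ^ 2))) : ℝ) : ℂ)) :
    ∫ x : ℝ, (starRingEnd ℂ) (coherentState t e ε x) *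
        inverseFourierTransform
          (fun E : ℝ => S E * fourierTransform (coherentState t e ε) E) x
      = (((Real.sqrt Real.pi * ε)⁻¹ : ℝ) : ℂ) *
        ∫ E : ℝ, S E * ((Real.exp (-((E - e) ^ 2 / ε ^ 2)) : ℝ) : ℂ) := by
  rw [integral_conj_mul_fourierMultiplier (integrable_coherentState t e hε.ne')
    (integrable_mul_fourierTransform_coherentState t hε.ne' hS)]
  simp only [norm_fourierTransform_coherentState_sq t e hε.ne', abs_of_pos hε,
    ofReal_mul _ (Real.exp _), mul_left_comm _ (((Real.sqrt Real.pi * ε)⁻¹ : ℝ) : ℂ),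
    integral_const_mul]

/-- **Diagonal coherent-state matrix elements of a Fourier multiplier are Gaussian
averages of its on-shell symbol**: if `S : ℝ → ℂ` is bounded and measurable and
`A = 𝓕⁻¹ ∘ M_S ∘ 𝓕` is the Fourier multiplier with symbol `S`, then for all `t, e ∈ ℝ`
and `ε > 0`, `⟪ψ_{t,e,ε}, A ψ_{t,e,ε}⟫ = (√π ε)⁻¹ ∫ S(E) e^{-(E-e)²/ε²} dE`. -/
theorem coherentState_multiplier_matrix_element
    (S : ℝ → ℂ) (hSmeas : Measurable S) (hSbdd : ∃ M : ℝ, ∀ E : ℝ, ‖S E‖ ≤ M)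
    (t e ε : ℝ) (hε : 0 < ε) :
    ∫ x : ℝ, (starRingEnd ℂ) (coherentState t e ε x) *
        inverseFourierTransform
          (fun E : ℝ => S E * fourierTransform (coherentState t e ε) E) x
      = (((Real.sqrt Real.pi * ε)⁻¹ : ℝ) : ℂ) *
        ∫ E : ℝ, S E * ((Real.exp (-((E - e) ^ 2 / ε ^ 2)) : ℝ) : ℂ) := by
  obtain ⟨M, hM⟩ := hSbdd
  exact coherentState_multiplier_matrix_element_general S t e ε hε <|
    (integrable_exp_neg_sub_sq_div e hε.ne').ofReal.bdd_mul hSmeas.aestronglyMeasurable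
      (.of_forall hM)
end

section
/- First-order adiabatic error in the soluble model: let v : ℝ → ℝ be measurable with ∫_ℝ |v(u)| du < ∞ and ∫_ℝ |u·v(u)| du < ∞, and let f : ℝ → ℝ be differentiable with bounded derivative. Fix s, x ∈ ℝ. Then, writing S_f(s) = exp(−i f(s) ∫_ℝ v(u) du) for the frozen scattering amplitude, the dynamical amplitude S_d(s,x;ω) = exp(−i ∫_ℝ f(s − ωτ) v(x − τ) dτ) satisfies lim_{ω→0} (1/ω) · (S_d(s,x;ω) − S_f(s)) = i · f'(s) · (∫_ℝ τ · v(x − τ) dτ) · S_f(s). In particular the first-order error depends on the first moment ∫ τ v(x−τ) dτ of the potential, which is not determined by the frozen scattering data f(s)∫v. -/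
open MeasureTheory Complex Filter Topology

/-!
At `ω = 0` the dynamical phase `∫ f (s - ω τ) v (x - τ) dτ` collapses to the frozen phase
`f s ∫ v`, so the limit is the derivative at `ω = 0` of `exp (-i · phase)`. The phase is
differentiated under the integral sign by dominated convergence: a bound
`|f y - f s| ≤ K |y - s|` dominates the difference quotients in `ω` by `K |τ v (x - τ)|`, and the
first moment of `v` makes this integrable.
-/

section DifferentiationUnderIntegral

variable {α E : Type*} [MeasurableSpace α] {μ : Measure α} [NormedAddCommGroup E]
  [NormedSpace ℝ E] {f : ℝ → ℝ} {s f' K : ℝ} {φ : α → ℝ} {g : α → E}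

theorem norm_comp_add_mul_sub_smul_le (hK : ∀ y, |f y - f s| ≤ K * |y - s|) (ω t : ℝ) (e : E) :
    ‖(f (s + ω * t) - f s) • e‖ ≤ |ω| * (K * ‖t • e‖) := by
  calc ‖(f (s + ω * t) - f s) • e‖
      = |f (s + ω * t) - f s| * ‖e‖ := by rw [norm_smul, Real.norm_eq_abs]
    _ ≤ K * |s + ω * t - s| * ‖e‖ := by gcongr; exact hK _
    _ = |ω| * (K * ‖t • e‖) := by
      rw [add_sub_cancel_left, abs_mul, norm_smul, Real.norm_eq_abs]; ring

theorem integrable_comp_add_mul_sub_smul (hf : Measurable f)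
    (hK : ∀ y, |f y - f s| ≤ K * |y - s|) (hφ : AEMeasurable φ μ)
    (hg : AEStronglyMeasurable g μ) (hφg : Integrable (fun a => φ a • g a) μ) (ω : ℝ) :
    Integrable (fun a => (f (s + ω * φ a) - f s) • g a) μ := by
  have hfφ : AEMeasurable (fun a => f (s + ω * φ a) - f s) μ :=
    (hf.comp_aemeasurable ((hφ.const_mul ω).const_add s)).sub_const _
  exact ((hφg.norm.const_mul K).const_mul |ω|).mono' (hfφ.aestronglyMeasurable.smul hg)
    (.of_forall fun a => norm_comp_add_mul_sub_smul_le hK ω (φ a) (g a))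

theorem integral_comp_add_mul_smul (hf : Measurable f) (hK : ∀ y, |f y - f s| ≤ K * |y - s|)
    (hφ : AEMeasurable φ μ) (hg : Integrable g μ) (hφg : Integrable (fun a => φ a • g a) μ)
    (ω : ℝ) :
    ∫ a, f (s + ω * φ a) • g a ∂μ =
      (∫ a, (f (s + ω * φ a) - f s) • g a ∂μ) + f s • ∫ a, g a ∂μ := by
  rw [← integral_smul, ← integral_add
    (integrable_comp_add_mul_sub_smul hf hK hφ hg.aestronglyMeasurable hφg ω) (hg.fun_smul (f s))]
  simp only [sub_smul, sub_add_cancel]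

theorem tendsto_slope_comp_add_mul_smul (hfs : HasDerivAt f f' s) (t : ℝ) (e : E) :
    Tendsto (fun ω => ω⁻¹ • (f (s + ω * t) - f s) • e) (𝓝[≠] 0) (𝓝 (f' • t • e)) := by
  have hline : HasDerivAt (fun ω => s + ω * t) t 0 := (hasDerivAt_mul_const t).const_add s
  have hcomp := (hfs.comp_of_eq 0 hline (by rw [zero_mul, add_zero])).smul_const e
  simpa only [Function.comp_apply, zero_add, zero_mul, add_zero, sub_smul, smul_smul]
    using hcomp.tendsto_slope_zero

theorem hasDerivAt_integral_comp_add_mul_smul (hf : Measurable f) (hfs : HasDerivAt f f' s)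
    (hK : ∀ y, |f y - f s| ≤ K * |y - s|) (hφ : AEMeasurable φ μ) (hg : Integrable g μ)
    (hφg : Integrable (fun a => φ a • g a) μ) :
    HasDerivAt (fun ω => ∫ a, f (s + ω * φ a) • g a ∂μ) (f' • ∫ a, φ a • g a ∂μ) 0 := by
  have slope_eq (ω : ℝ) :
      ω⁻¹ • (∫ a, f (s + (0 + ω) * φ a) • g a ∂μ - ∫ a, f (s + 0 * φ a) • g a ∂μ) =
        ∫ a, ω⁻¹ • (f (s + ω * φ a) - f s) • g a ∂μ := by
    simp only [integral_comp_add_mul_smul hf hK hφ hg hφg ω, zero_add, zero_mul, add_zero,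
      integral_smul, add_sub_cancel_right]
  rw [hasDerivAt_iff_tendsto_slope_zero, ← integral_smul]
  simp only [slope_eq]
  refine tendsto_integral_filter_of_dominated_convergence (fun a => K * ‖φ a • g a‖)
    (.of_forall fun ω => ?_) ?_ (hφg.norm.const_mul K)
    (.of_forall fun a => tendsto_slope_comp_add_mul_smul hfs (φ a) (g a))
  · exact (integrable_comp_add_mul_sub_smul hf hK hφ hg.aestronglyMeasurable
      hφg ω).aestronglyMeasurable.const_smul ω⁻¹
  · filter_upwards [self_mem_nhdsWithin] with ω hω
    refine .of_forall fun a => ?_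
    rw [norm_smul, norm_inv, Real.norm_eq_abs, inv_mul_le_iff₀ (abs_pos.2 hω)]
    exact norm_comp_add_mul_sub_smul_le hK ω (φ a) (g a)

end DifferentiationUnderIntegral

theorem integrable_smul_comp_sub_left {E : Type*} [NormedAddCommGroup E] [NormedSpace ℝ E]
    {v : ℝ → E} (hv : Integrable v) (hvmom : Integrable fun u => u • v u) (x : ℝ) :
    Integrable fun τ => τ • v (x - τ) := by
  have hsub : Integrable fun τ => x • v (x - τ) - (x - τ) • v (x - τ) :=
    ((hv.comp_sub_left x).smul x).sub (hvmom.comp_sub_left x)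
  simpa only [← sub_smul, sub_sub_cancel] using hsub

theorem tendsto_ofReal_inv_mul_sub_of_hasDerivAt_zero {F : ℝ → ℂ} {F' : ℂ}
    (hF : HasDerivAt F F' 0) :
    Tendsto (fun ω : ℝ => (ω : ℂ)⁻¹ * (F ω - F 0)) (𝓝[≠] 0) (𝓝 F') := by
  simpa only [zero_add, real_smul, ofReal_inv] using hF.tendsto_slope_zero

section SolubleModel

/-- The real phase accumulated at epoch `s` along the free trajectory through `x`: the dynamical
S matrix is multiplication by `exp (-i · phase)`. -/
noncomputable def dynamicalPhase (f v : ℝ → ℝ) (s x ω : ℝ) : ℝ :=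
  ∫ τ : ℝ, f (s - ω * τ) * v (x - τ)

/-- The dynamical amplitude `S_d(s, x; ω)`, that is, the value at `x` of the multiplication
operator given by the dynamical S matrix at epoch `s`. -/
noncomputable def dynamicalAmplitude (f v : ℝ → ℝ) (s x ω : ℝ) : ℂ :=
  cexp (-(I * (dynamicalPhase f v s x ω : ℂ)))

/-- The frozen amplitude `S_f(s)`, the S matrix of the time-independent Hamiltonian
`P + f(s) V`. -/
noncomputable def frozenAmplitude (f v : ℝ → ℝ) (s : ℝ) : ℂ :=
  cexp (-(I * ((f s * ∫ u : ℝ, v u : ℝ) : ℂ)))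

theorem dynamicalPhase_zero (f v : ℝ → ℝ) (s x : ℝ) :
    dynamicalPhase f v s x 0 = f s * ∫ u : ℝ, v u := by
  simp only [dynamicalPhase, zero_mul, sub_zero, integral_const_mul,
    integral_sub_left_eq_self v volume x]

theorem dynamicalAmplitude_zero (f v : ℝ → ℝ) (s x : ℝ) :
    dynamicalAmplitude f v s x 0 = frozenAmplitude f v s := by
  rw [dynamicalAmplitude, dynamicalPhase_zero, frozenAmplitude]

variable {f v : ℝ → ℝ} {s f' K : ℝ}

theorem hasDerivAt_dynamicalPhase_zero (hv : Integrable v) (hvmom : Integrable fun u => u * v u)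
    (hf : Measurable f) (hfs : HasDerivAt f f' s) (hK : ∀ y, |f y - f s| ≤ K * |y - s|) (x : ℝ) :
    HasDerivAt (dynamicalPhase f v s x) (-(f' * ∫ τ : ℝ, τ * v (x - τ))) 0 := by
  have hmom : Integrable fun τ => -τ • v (x - τ) := by
    simpa only [neg_smul] using (integrable_smul_comp_sub_left hv hvmom x).fun_neg
  have hderiv := hasDerivAt_integral_comp_add_mul_smul hf hfs hK measurable_neg.aemeasurable
    (hv.comp_sub_left x) hmom
  simpa only [dynamicalPhase, smul_eq_mul, mul_neg, neg_mul, ← sub_eq_add_neg, integral_neg]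
    using! hderiv

theorem hasDerivAt_dynamicalAmplitude_zero (hv : Integrable v)
    (hvmom : Integrable fun u => u * v u) (hf : Measurable f) (hfs : HasDerivAt f f' s)
    (hK : ∀ y, |f y - f s| ≤ K * |y - s|) (x : ℝ) :
    HasDerivAt (dynamicalAmplitude f v s x)
      (I * f' * ((∫ τ : ℝ, τ * v (x - τ) : ℝ) : ℂ) * frozenAmplitude f v s) 0 := by
  have hphase := (hasDerivAt_dynamicalPhase_zero hv hvmom hf hfs hK x).ofReal_comp
  rw [← dynamicalAmplitude_zero f v s x]
  refine (hphase.const_mul I).fun_neg.cexp.congr_deriv ?_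
  rw [dynamicalAmplitude]
  push_cast
  ring

theorem soluble_model_adiabatic_error_general (hv : Integrable v)
    (hvmom : Integrable fun u => u * v u) (hf : Measurable f) (hfs : HasDerivAt f f' s)
    (hK : ∀ y, |f y - f s| ≤ K * |y - s|) (x : ℝ) :
    Tendsto (fun ω : ℝ => (ω : ℂ)⁻¹ * (dynamicalAmplitude f v s x ω - frozenAmplitude f v s))
      (𝓝[≠] 0)
      (𝓝 (I * f' * ((∫ τ : ℝ, τ * v (x - τ) : ℝ) : ℂ) * frozenAmplitude f v s)) := by
  simpa only [dynamicalAmplitude_zero] using tendsto_ofReal_inv_mul_sub_of_hasDerivAt_zero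
    (hasDerivAt_dynamicalAmplitude_zero hv hvmom hf hfs hK x)

end SolubleModel

/-- **First-order adiabatic error in the soluble model**: for `v` measurable with finite
mass and first moment and `f` differentiable with bounded derivative, the dynamical
amplitude `S_d(s,x;ω) = exp(-i ∫ f(s - ωτ) v(x - τ) dτ)` and the frozen amplitude
`S_f(s) = exp(-i f(s) ∫ v)` satisfy
`lim_{ω→0} ω⁻¹ (S_d(s,x;ω) - S_f(s)) = i f'(s) (∫ τ v(x - τ) dτ) S_f(s)`.
The first-order error depends on the first moment of the potential, which is not
determined by the frozen scattering data. -/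
theorem soluble_model_adiabatic_error
    (v : ℝ → ℝ) (hvm : Measurable v)
    (hvi : Integrable v (volume : Measure ℝ))
    (hvmom : Integrable (fun u : ℝ => u * v u) (volume : Measure ℝ))
    (f f' : ℝ → ℝ) (hf : ∀ y : ℝ, HasDerivAt f (f' y) y)
    (hf'b : ∃ M : ℝ, ∀ y : ℝ, |f' y| ≤ M)
    (s x : ℝ) :
    Tendsto
      (fun ω : ℝ =>
        (ω : ℂ)⁻¹ *
          (Complex.exp (-(Complex.I * ((∫ τ : ℝ, f (s - ω * τ) * v (x - τ) : ℝ) : ℂ))) -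
            Complex.exp (-(Complex.I * ((f s * ∫ u : ℝ, v u : ℝ) : ℂ)))))
      (𝓝[≠] (0 : ℝ))
      (𝓝 (Complex.I * (f' s : ℂ) * ((∫ τ : ℝ, τ * v (x - τ) : ℝ) : ℂ) *
        Complex.exp (-(Complex.I * ((f s * ∫ u : ℝ, v u : ℝ) : ℂ))))) := by
  obtain ⟨M, hM⟩ := hf'b
  have hf_meas : Measurable f :=
    (continuous_iff_continuousAt.2 fun y => (hf y).continuousAt).measurable
  have hf_growth (y : ℝ) : |f y - f s| ≤ M * |y - s| :=
    convex_univ.norm_image_sub_le_of_norm_hasDerivWithin_le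
      (fun z _ => (hf z).hasDerivWithinAt) (fun z _ => hM z) (Set.mem_univ s) (Set.mem_univ y)
  exact soluble_model_adiabatic_error_general hvi hvmom hf_meas (hf s) hf_growth x
end
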